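/- Let F be a free filter on ℕ that is not relatively equivalent to the Fréchet filter. Then for every A ∈ F such that ℕ \ A is infinite (i.e., A ∈ F \ F_r) there is a bijection f : A → ℕ such that f[F|_A] = F; in particular the trace filter F|_A is equivalent to F. -/

import Mathlib

open Set

/-- `f[G] = {A : f⁻¹(A) ∈ G}`, the image (Rudin–Keisler) filter of a family of sets. -/
def mapFilter {α β : Type*} (f : α → β) (G : Set (Set α)) : Set (Set β) := {A | f ⁻¹' A ∈ G}

/-- `F` is a (proper) filter of subsets. -/
def IsFilterFam {α : Type*} (F : Set (Set α)) : Prop :=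
  Set.univ ∈ F ∧ (∀ A ∈ F, ∀ B : Set α, A ⊆ B → B ∈ F) ∧ (∀ A ∈ F, ∀ B ∈ F, A ∩ B ∈ F)

/-- A free filter: a proper filter containing all cofinite sets. -/
def IsFreeFilter {α : Type*} (F : Set (Set α)) : Prop :=
  IsFilterFam F ∧ (∀ A : Set α, Aᶜ.Finite → A ∈ F) ∧ ∅ ∉ F

/-- `S → F` : `S` is an infinite set converging to the filter `F`, i.e. `S ⊆* A` for all `A ∈ F`. -/
def ConvTo {α : Type*} (S : Set α) (F : Set (Set α)) : Prop :=
  S.Infinite ∧ ∀ A ∈ F, (S \ A).Finite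

/-- `F` is relatively equivalent to the Fréchet filter: some `A ∈ F` converges to `F`. -/
def RelFrechet {α : Type*} (F : Set (Set α)) : Prop := ∃ A ∈ F, ConvTo A F

/-- Rudin–Keisler order: `F ≤_RK G` iff `f[G] = F` for some surjection `f`. -/
def RKle {α : Type*} (F G : Set (Set α)) : Prop :=
  ∃ f : α → α, Function.Surjective f ∧ mapFilter f G = F

/-- `F ≈ G` : there is a bijection `f` with `f[F] = G`. -/
def EquivFilter {α : Type*} (F G : Set (Set α)) : Prop :=
  ∃ f : α → α, Function.Bijective f ∧ mapFilter f F = G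

/-- `F <_RK G` : `F ≤_RK G` and `¬ (F ≈ G)`. -/
def RKlt {α : Type*} (F G : Set (Set α)) : Prop := RKle F G ∧ ¬ EquivFilter F G

/-- An AD-family: an infinite family of infinite sets with pairwise finite intersections. -/
def IsADFamily {α : Type*} (𝒜 : Set (Set α)) : Prop :=
  𝒜.Infinite ∧ (∀ A ∈ 𝒜, A.Infinite) ∧ ∀ A ∈ 𝒜, ∀ B ∈ 𝒜, A ≠ B → (A ∩ B).Finite

/-- The ideal generated by a family `𝒜`: sets almost covered by finitely many members of `𝒜`. -/
def idealGen {α : Type*} (𝒜 : Set (Set α)) : Set (Set α) :=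
  {X | ∃ 𝒜' : Finset (Set α), ↑𝒜' ⊆ 𝒜 ∧ (X \ ⋃₀ ↑𝒜').Finite}

/-- `S_𝒜`: the filter dual to the ideal generated by `𝒜`. -/
def SFam {α : Type*} (𝒜 : Set (Set α)) : Set (Set α) := {F | Fᶜ ∈ idealGen 𝒜}

/-- `F_𝒟 = {F : D ⊆* F for every D ∈ 𝒟}`. -/
def FFam {α : Type*} (𝒟 : Set (Set α)) : Set (Set α) := {F | ∀ D ∈ 𝒟, (D \ F).Finite}

/-- A nowhere MAD family: every set outside the generated ideal contains an infinite set
almost disjoint from every member of `𝒜`. -/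
def IsNMAD {α : Type*} (𝒜 : Set (Set α)) : Prop :=
  IsADFamily 𝒜 ∧ ∀ X : Set α, X ∉ idealGen 𝒜 →
    ∃ B ⊆ X, B.Infinite ∧ ∀ A ∈ 𝒜, (B ∩ A).Finite

/-- A partition of `ℕ` into infinitely many infinite sets. -/
def IsInfPartition (𝒬 : Set (Set ℕ)) : Prop :=
  𝒬.Infinite ∧ (∀ P ∈ 𝒬, P.Infinite) ∧ ⋃₀ 𝒬 = Set.univ ∧
    ∀ P ∈ 𝒬, ∀ Q ∈ 𝒬, P ≠ Q → P ∩ Q = ∅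

/-- `F` is a Fréchet–Urysohn filter: every `F`-positive set contains a sequence converging to `F`. -/
def IsFUFilter {α : Type*} (F : Set (Set α)) : Prop :=
  ∀ A : Set α, Aᶜ ∉ F → ∃ S ⊆ A, ConvTo S F

/-- The trace filter `F|_A = {G ∩ A : G ∈ F}`. -/
def traceFam {α : Type*} (F : Set (Set α)) (A : Set α) : Set (Set α) := {S | ∃ G ∈ F, S = G ∩ A}

/-- Todorčević–Uzcátegui order: there are `A ∈ G⁺`, `B ∈ F` and a bijection `f : A → B`
with `f[G|_A] = F|_B`. -/
def TUle {α : Type*} (F G : Set (Set α)) : Prop :=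
  ∃ A : Set α, Aᶜ ∉ G ∧ ∃ B ∈ F, ∃ f : α → α, Set.BijOn f A B ∧
    {Y : Set α | Y ⊆ B ∧ A ∩ f ⁻¹' Y ∈ traceFam G A} = traceFam F B

/-!
Since `A` does not converge to `F`, some `B ∈ F` leaves `A \ B` infinite. Keep `A ∩ B` fixed and
send the countably infinite set `A \ B` onto the countably infinite set `(A ∩ B)ᶜ`. The resulting
bijection from `A` onto the whole space is the identity on a member of `F`, so it preserves `F`.
-/

section Bijections

variable {α β : Type*}

theorem exists_bijOn_of_countable_of_infinite {s : Set α} {t : Set β} (hs : s.Countable)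
    (hs' : s.Infinite) (ht : t.Countable) (ht' : t.Infinite) : ∃ g : α → β, BijOn g s t := by
  have := hs.to_subtype
  have := hs'.to_subtype
  have := ht.to_subtype
  have := ht'.to_subtype
  have := ht'.nonempty.to_type
  obtain ⟨e⟩ : Nonempty (s ≃ t) := nonempty_equiv_of_countable
  obtain ⟨g, hg⟩ := Subtype.exists_pi_extension (α := fun _ ↦ β) fun x : s ↦ (e x : β)
  have g_eq (x : s) : g x = e x := congrFun hg x
  refine ⟨g, fun x hx ↦ ?mapsTo, fun x hx y hy hxy ↦ ?injOn, fun y hy ↦ ?surjOn⟩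
  case mapsTo => exact g_eq ⟨x, hx⟩ ▸ (e ⟨x, hx⟩).2
  case injOn =>
    rw [g_eq ⟨x, hx⟩, g_eq ⟨y, hy⟩] at hxy
    exact congrArg Subtype.val (e.injective (Subtype.ext hxy))
  case surjOn =>
    exact ⟨e.symm ⟨y, hy⟩, Subtype.prop _, by rw [g_eq, e.apply_symm_apply]⟩

theorem bijOn_piecewise_union {s s' : Set α} {t t' : Set β} {f g : α → β}
    [∀ x, Decidable (x ∈ s)] (hf : BijOn f s t) (hg : BijOn g s' t') (hs : Disjoint s s')
    (ht : Disjoint t t') : BijOn (s.piecewise f g) (s ∪ s') (t ∪ t') := by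
  have left : BijOn (s.piecewise f g) s t := hf.congr (s.piecewise_eqOn f g).symm
  have right : BijOn (s.piecewise f g) s' t' :=
    hg.congr ((s.piecewise_eqOn_compl f g).mono hs.subset_compl_left).symm
  refine left.union right ((injOn_union hs).2 ⟨left.injOn, right.injOn, fun x hx y hy ↦ ?_⟩)
  exact ht.ne_of_mem (left.mapsTo hx) (right.mapsTo hy)

end Bijections

section FilterFamilies

variable {α : Type*} {F : Set (Set α)} {A : Set α}

/-- A family of sets satisfying the filter axioms, bundled as a `Filter`; it need not be proper. -/
def IsFilterFam.toFilter (hF : IsFilterFam F) : Filter α where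
  sets := F
  univ_sets := hF.1
  sets_of_superset hs hst := hF.2.1 _ hs _ hst
  inter_sets hs ht := hF.2.2 _ hs _ ht

theorem IsFilterFam.inter_mem_traceFam_iff (hF : IsFilterFam F) (hA : A ∈ F) {S : Set α} :
    A ∩ S ∈ traceFam F A ↔ S ∈ F := by
  constructor
  · rintro ⟨G, hG, hSG⟩
    have hAS : A ∩ S ∈ F := hSG ▸ hF.2.2 G hG A hA
    exact hF.2.1 _ hAS S inter_subset_right
  · exact fun hS ↦ ⟨S, hS, inter_comm A S⟩

theorem IsFilterFam.mapFilter_congr {β : Type*} {f g : α → β} (hF : IsFilterFam F) (hA : A ∈ F)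
    (hfg : EqOn f g A) : mapFilter f F = mapFilter g F := by
  have hfg' : f =ᶠ[hF.toFilter] g := Filter.mem_of_superset (x := A) hA hfg
  exact congrArg Filter.sets (Filter.map_congr hfg')

theorem IsFreeFilter.infinite_of_mem (hF : IsFreeFilter F) (hA : A ∈ F) : A.Infinite := by
  obtain ⟨⟨-, -, inter_mem⟩, mem_of_cofinite, empty_notMem⟩ := hF
  intro hfin
  have hAc : Aᶜ ∈ F := mem_of_cofinite _ (by rwa [compl_compl])
  exact empty_notMem (inter_compl_self A ▸ inter_mem A hA Aᶜ hAc)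

theorem not_convTo_iff (hA : A.Infinite) : ¬ ConvTo A F ↔ ∃ B ∈ F, (A \ B).Infinite := by
  rw [ConvTo, and_iff_right hA]
  push Not
  rfl

end FilterFamilies

theorem statement6_general {α : Type*} [Countable α] {F : Set (Set α)} (hF : IsFilterFam F)
    {A : Set α} (hA : A ∈ F) (hAinf : A.Infinite) (hAF : ¬ ConvTo A F) (hAc : Aᶜ.Infinite) :
    ∃ f : α → α, BijOn f A univ ∧ {Y : Set α | A ∩ f ⁻¹' Y ∈ traceFam F A} = F := by
  classical
  obtain ⟨B, hB, hAB⟩ := (not_convTo_iff hAinf).1 hAF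
  have hC : A ∩ B ∈ F := hF.2.2 A hA B hB
  have hCc : (A ∩ B)ᶜ.Infinite := hAc.mono (compl_subset_compl.2 inter_subset_left)
  obtain ⟨g, hg⟩ : ∃ g : α → α, BijOn g (A \ B) (A ∩ B)ᶜ :=
    exists_bijOn_of_countable_of_infinite (to_countable _) hAB (to_countable _) hCc
  refine ⟨(A ∩ B).piecewise id g, ?_, ?_⟩
  · have hbij := bijOn_piecewise_union (bijOn_id (A ∩ B)) hg disjoint_inf_sdiff disjoint_compl_right
    rwa [inter_union_sdiff, union_compl_self] at hbij
  · calc {Y : Set α | A ∩ (A ∩ B).piecewise id g ⁻¹' Y ∈ traceFam F A}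
      _ = mapFilter ((A ∩ B).piecewise id g) F := Set.ext fun _ ↦ hF.inter_mem_traceFam_iff hA
      _ = mapFilter id F := hF.mapFilter_congr hC (piecewise_eqOn _ _ _)
      _ = F := rfl

/-- If `F` is not relatively equivalent to the Fréchet filter, then for every `A ∈ F \ F_r`
there is a bijection `f : A → ℕ` with `f[F|_A] = F`. -/
theorem statement6 (F : Set (Set ℕ)) (hF : IsFreeFilter F) (hnr : ¬ RelFrechet F)
    (A : Set ℕ) (hA : A ∈ F) (hAc : Aᶜ.Infinite) :
    ∃ f : ℕ → ℕ, Set.BijOn f A Set.univ ∧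
      {Y : Set ℕ | A ∩ f ⁻¹' Y ∈ traceFam F A} = F :=
  statement6_general hF.1 hA (hF.infinite_of_mem hA) (fun h ↦ hnr ⟨A, hA, h⟩) hAc
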